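/- The polar dual P° = {m ∈ ℝ² : ⟨m, v⟩ ≥ -1 for all v ∈ P} of the polygon P has Lebesgue area 11/15; equivalently, its normalized volume (twice the Lebesgue area) equals 22/15. -/

import Mathlib

open MeasureTheory

/-!
The hexagon is centrally symmetric, so its polar dual is cut out by one inequality `|⟨m, v⟩| ≤ 1`
for each pair `±v` of vertices. In the coordinates `u = m₁ + 2 m₂`, `w = m₁ - 2 m₂`, which multiply
areas by `4`, two of these inequalities describe the square `|u|, |w| ≤ 1` and the third, in which
`2 m₁ + m₂ = (5 u + 3 w) / 4`, cuts off two opposite right-angled corners of area `8 / 15` each.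
Hence the area is `(4 - 16 / 15) / 4 = 11 / 15`.
-/

section PolarDual

variable {𝕜 M V : Type*} [CommRing 𝕜] [LinearOrder 𝕜] [AddCommGroup M] [Module 𝕜 M]
  [AddCommGroup V] [Module 𝕜 V]

/-- The polar dual of `s` with respect to the pairing `B`, in the sign convention `-1 ≤ ⟨m, v⟩` of
toric geometry; `LinearMap.polar` bounds the norm of the pairing instead. -/
def polarDual (B : M →ₗ[𝕜] V →ₗ[𝕜] 𝕜) (s : Set V) : Set M :=
  {m | ∀ v ∈ s, -1 ≤ B m v}

variable [IsStrictOrderedRing 𝕜] (B : M →ₗ[𝕜] V →ₗ[𝕜] 𝕜) (s : Set V)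

theorem polarDual_convexHull : polarDual B (convexHull 𝕜 s) = polarDual B s := by
  ext m
  exact (convex_halfSpace_ge (B m).isLinear (-1)).convexHull_subset_iff

theorem polarDual_union_neg : polarDual B (s ∪ -s) = {m | ∀ v ∈ s, |B m v| ≤ 1} := by
  ext m
  constructor
  · intro hm v hv
    have h_neg : -1 ≤ B m (-v) := hm (-v) (.inr (by simpa using hv))
    rw [map_neg, neg_le_neg_iff] at h_neg
    exact abs_le.2 ⟨hm v (.inl hv), h_neg⟩
  · rintro hm v (hv | hv)
    · exact (abs_le.1 (hm v hv)).1
    · have h_le : B m (-v) ≤ 1 := (abs_le.1 (hm (-v) hv)).2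
      rwa [map_neg, neg_le] at h_le

end PolarDual

/-- The standard pairing `⟨m, v⟩ = m₁ v₁ + m₂ v₂` of the plane with itself, as a bilinear map. -/
def planePairing (R : Type*) [CommRing R] : R × R →ₗ[R] R × R →ₗ[R] R :=
  (LinearMap.mul R R).compl₁₂ (.fst R R R) (.fst R R R) +
    (LinearMap.mul R R).compl₁₂ (.snd R R R) (.snd R R R)

theorem planePairing_apply {R : Type*} [CommRing R] (m v : R × R) :
    planePairing R m v = m.1 * v.1 + m.2 * v.2 :=
  rfl

theorem polarDual_hexagon :
    polarDual (planePairing ℝ)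
        (convexHull ℝ {(2, 1), (1, 2), (-1, 2), (-2, -1), (-1, -2), (1, -2)}) =
      {m | |m.1 + 2 * m.2| ≤ 1 ∧ |m.1 - 2 * m.2| ≤ 1 ∧ |2 * m.1 + m.2| ≤ 1} := by
  have h_symm : ({(2, 1), (1, 2), (-1, 2), (-2, -1), (-1, -2), (1, -2)} : Set (ℝ × ℝ)) =
      {(1, 2), (1, -2), (2, 1)} ∪ -{(1, 2), (1, -2), (2, 1)} := by
    ext v
    simp only [Set.neg_insert, Set.neg_singleton, Prod.neg_mk, neg_neg, Set.mem_union,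
      Set.mem_insert_iff, Set.mem_singleton_iff]
    tauto
  rw [polarDual_convexHull, h_symm, polarDual_union_neg]
  ext m
  simp only [planePairing_apply, Set.mem_insert_iff, Set.mem_singleton_iff, forall_eq_or_imp,
    forall_eq, Set.mem_ofPred_eq]
  ring_nf

section Area

theorem volume_preimage_linear_forms {a b c d : ℝ} (h_det : a * d - b * c ≠ 0) (s : Set (ℝ × ℝ)) :
    volume {x : ℝ × ℝ | (a * x.1 + b * x.2, c * x.1 + d * x.2) ∈ s} =
      ENNReal.ofReal |(a * d - b * c)⁻¹| * volume s := by
  let f : ℝ × ℝ →ₗ[ℝ] ℝ × ℝ :=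
    Matrix.toLin (.finTwoProd ℝ) (.finTwoProd ℝ) !![a, b; c, d]
  have hf_det : LinearMap.det f = a * d - b * c := by
    rw [LinearMap.det_toLin, Matrix.det_fin_two_of]
  have hf_preimage : f ⁻¹' s = {x | (a * x.1 + b * x.2, c * x.1 + d * x.2) ∈ s} := by
    ext x
    rw [Set.mem_preimage, Matrix.toLin_finTwoProd_apply, Set.mem_ofPred_eq]
  rw [← hf_preimage, ← hf_det]
  exact volume.addHaar_preimage_linearMap (hf_det ▸ h_det) s

/-- The corner at `(p, q)` that the line `a x + b y = c` cuts off the quadrant `x ≤ p`, `y ≤ q`.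
It excludes the line, so that it is the part of the quadrant lost when the half-plane
`a x + b y ≤ c` is retained. -/
def cutCorner (a b c p q : ℝ) : Set (ℝ × ℝ) :=
  {x | x.1 ≤ p ∧ x.2 ≤ q ∧ c < a * x.1 + b * x.2}

variable {a b c p q : ℝ}

theorem measurableSet_cutCorner : MeasurableSet (cutCorner a b c p q) := by
  have h_halfPlane : MeasurableSet {x : ℝ × ℝ | c < a * x.1 + b * x.2} :=
    measurableSet_lt (by fun_prop) (by fun_prop)
  exact (measurable_fst measurableSet_Iic).inter
    ((measurable_snd measurableSet_Iic).inter h_halfPlane)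

theorem volume_cutCorner_slice (ha : 0 < a) (hb : 0 < b) (x : ℝ) :
    volume (Prod.mk x ⁻¹' cutCorner a b c p q) =
      (Set.Ioc ((c - b * q) / a) p).indicator
        (fun x ↦ ENNReal.ofReal (a / b * (x - (c - b * q) / a))) x := by
  have h_length : q - (c - a * x) / b = a / b * (x - (c - b * q) / a) := by
    field_simp
    ring
  by_cases hxp : x ≤ p
  · have h_slice : Prod.mk x ⁻¹' cutCorner a b c p q = Set.Ioc ((c - a * x) / b) q := by
      ext y
      simp only [cutCorner, Set.mem_preimage, Set.mem_ofPred_eq, Set.mem_Ioc, hxp, true_and,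
        div_lt_iff₀ hb, sub_lt_iff_lt_add', mul_comm y, and_comm]
    rw [h_slice, Real.volume_Ioc, h_length, Set.indicator_apply]
    split_ifs with hx
    · rfl
    · have hx_le : x ≤ (c - b * q) / a := by simpa [hxp] using hx
      exact ENNReal.ofReal_of_nonpos
        (mul_nonpos_of_nonneg_of_nonpos (by positivity) (sub_nonpos.2 hx_le))
  · simp [cutCorner, hxp]

theorem volume_cutCorner (ha : 0 < a) (hb : 0 < b) (hc : c ≤ a * p + b * q) :
    volume (cutCorner a b c p q) = ENNReal.ofReal ((a * p + b * q - c) ^ 2 / (2 * a * b)) := by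
  set x₀ := (c - b * q) / a with hx₀
  have hx₀p : x₀ ≤ p := (div_le_iff₀ ha).2 (by linarith)
  have h_nonneg : ∀ x ∈ Set.Ioc x₀ p, 0 ≤ a / b * (x - x₀) := fun x hx ↦
    mul_nonneg (by positivity) (sub_nonneg.2 hx.1.le)
  have h_integrable : IntegrableOn (fun x ↦ a / b * (x - x₀)) (Set.Ioc x₀ p) :=
    (show Continuous fun x ↦ a / b * (x - x₀) by fun_prop).integrableOn_Ioc
  calc volume (cutCorner a b c p q)
      = ∫⁻ x in Set.Ioc x₀ p, ENNReal.ofReal (a / b * (x - x₀)) := by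
        rw [Measure.volume_eq_prod, Measure.prod_apply measurableSet_cutCorner,
          lintegral_congr (volume_cutCorner_slice ha hb), lintegral_indicator measurableSet_Ioc]
    _ = ENNReal.ofReal (∫ x in x₀..p, a / b * (x - x₀)) := by
        rw [intervalIntegral.integral_of_le hx₀p, ofReal_integral_eq_lintegral_ofReal h_integrable
          (ae_restrict_of_forall_mem measurableSet_Ioc h_nonneg)]
    _ = ENNReal.ofReal ((a * p + b * q - c) ^ 2 / (2 * a * b)) := by
        rw [intervalIntegral.integral_const_mul,
          intervalIntegral.integral_comp_sub_right (fun x ↦ x), integral_id, hx₀]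
        congr 1
        field_simp
        ring

theorem rectangle_inter_strip_eq_sdiff_cutCorner :
    {x : ℝ × ℝ | |x.1| ≤ p ∧ |x.2| ≤ q ∧ |a * x.1 + b * x.2| ≤ c} =
      (Set.Icc (-p) p ×ˢ Set.Icc (-q) q) \ (cutCorner a b c p q ∪ -cutCorner a b c p q) := by
  ext x
  simp only [cutCorner, abs_le, Set.mem_ofPred_eq, Set.mem_sdiff, Set.mem_prod, Set.mem_Icc,
    Set.mem_union, Set.mem_neg, Prod.fst_neg, Prod.snd_neg]
  grind

theorem cutCorner_subset_rectangle (ha : 0 < a) (hb : 0 < b) (hc : |a * p - b * q| ≤ c) :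
    cutCorner a b c p q ⊆ Set.Icc (-p) p ×ˢ Set.Icc (-q) q := by
  rintro ⟨x, y⟩ ⟨hx : x ≤ p, hy : y ≤ q, hxy : c < a * x + b * y⟩
  obtain ⟨hc₁, hc₂⟩ := abs_le.1 hc
  have hx_neg : -p ≤ x := by
    have := mul_le_mul_of_nonneg_left hy hb.le
    exact le_of_mul_le_mul_left (by linarith) ha
  have hy_neg : -q ≤ y := by
    have := mul_le_mul_of_nonneg_left hx ha.le
    exact le_of_mul_le_mul_left (by linarith) hb
  exact ⟨⟨hx_neg, hx⟩, ⟨hy_neg, hy⟩⟩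

theorem disjoint_cutCorner_neg (hc : 0 ≤ c) :
    Disjoint (cutCorner a b c p q) (-cutCorner a b c p q) := by
  refine Set.disjoint_left.2 fun x hx hx_neg ↦ ?_
  have h_pos : c < a * x.1 + b * x.2 := hx.2.2
  have h_neg : c < a * -x.1 + b * -x.2 := hx_neg.2.2
  linarith

theorem volume_rectangle_inter_strip (ha : 0 < a) (hb : 0 < b) (hc₁ : |a * p - b * q| ≤ c)
    (hc₂ : c ≤ a * p + b * q) :
    volume {x : ℝ × ℝ | |x.1| ≤ p ∧ |x.2| ≤ q ∧ |a * x.1 + b * x.2| ≤ c} =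
      ENNReal.ofReal (4 * p * q - (a * p + b * q - c) ^ 2 / (a * b)) := by
  set R := Set.Icc (-p) p ×ˢ Set.Icc (-q) q with hR
  set T := cutCorner a b c p q
  have hp : 0 ≤ p := nonneg_of_mul_nonneg_right (by linarith [(abs_le.1 hc₁).1]) ha
  have hT : MeasurableSet T := measurableSet_cutCorner
  have hT_subset : T ⊆ R := cutCorner_subset_rectangle ha hb hc₁
  have hR_symm : -R = R := by simp only [hR, Set.neg_prod, Set.neg_Icc, neg_neg]
  have h_subset : T ∪ -T ⊆ R :=
    Set.union_subset hT_subset (hR_symm ▸ Set.neg_subset_neg.2 hT_subset)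
  have hR_volume : volume R = ENNReal.ofReal (4 * p * q) := by
    rw [hR, Measure.volume_eq_prod, Measure.prod_prod, Real.volume_Icc, Real.volume_Icc,
      ← ENNReal.ofReal_mul (by linarith)]
    ring_nf
  have hT_volume : volume (T ∪ -T) = ENNReal.ofReal ((a * p + b * q - c) ^ 2 / (a * b)) := by
    rw [measure_union (disjoint_cutCorner_neg ((abs_nonneg _).trans hc₁)) hT.neg,
      Measure.measure_neg, volume_cutCorner ha hb hc₂,
      ← ENNReal.ofReal_add (by positivity) (by positivity)]
    congr 1
    field_simp
    ring
  rw [rectangle_inter_strip_eq_sdiff_cutCorner, measure_sdiff h_subset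
    (hT.union hT.neg).nullMeasurableSet (hT_volume ▸ ENNReal.ofReal_ne_top), hR_volume, hT_volume,
    ENNReal.ofReal_sub _ (by positivity)]

end Area

/-- The polar dual `P° = {m : ⟨m,v⟩ ≥ -1 for all v ∈ P}` of the polygon `P`
(the convex hull of (2,1), (1,2), (-1,2), (-2,-1), (-1,-2), (1,-2)) has Lebesgue
area 11/15, i.e. its normalised volume is 22/15. -/
theorem volume_polar_dual_P :
    volume {m : ℝ × ℝ | ∀ v ∈ convexHull ℝ
        ({((2:ℝ), (1:ℝ)), (1, 2), (-1, 2), (-2, -1), (-1, -2), (1, -2)} : Set (ℝ × ℝ)),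
        m.1 * v.1 + m.2 * v.2 ≥ -1} = ENNReal.ofReal (11 / 15) := by
  let cutSquare : Set (ℝ × ℝ) := {x | |x.1| ≤ 1 ∧ |x.2| ≤ 1 ∧ |5 * x.1 + 3 * x.2| ≤ 4}
  have h_coords : {m : ℝ × ℝ | |m.1 + 2 * m.2| ≤ 1 ∧ |m.1 - 2 * m.2| ≤ 1 ∧ |2 * m.1 + m.2| ≤ 1} =
      {m | (1 * m.1 + 2 * m.2, 1 * m.1 + -2 * m.2) ∈ cutSquare} := by
    ext m
    have h_third : 5 * (m.1 + 2 * m.2) + 3 * (m.1 - 2 * m.2) = 4 * (2 * m.1 + m.2) := by ring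
    simp only [cutSquare, Set.mem_ofPred_eq, one_mul, neg_mul, ← sub_eq_add_neg, h_third, abs_mul,
      Nat.abs_ofNat, mul_le_iff_le_one_right (zero_lt_four' ℝ)]
  have h_area : volume cutSquare = ENNReal.ofReal (44 / 15) := by
    rw [volume_rectangle_inter_strip] <;> norm_num [abs_le]
  refine (congrArg volume polarDual_hexagon).trans ?_
  rw [h_coords, volume_preimage_linear_forms (by norm_num), h_area,
    ← ENNReal.ofReal_mul (abs_nonneg _)]
  norm_num [abs_of_neg]
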